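/- For every integer n ≥ 1, the universal enveloping algebra of the Lie algebra 𝕎_n of all k-linear derivations of the polynomial ring k[x₁, …, x_n] is neither left noetherian nor right noetherian. -/

import Mathlib

/-!
Statement 15: For every n ≥ 1, the universal enveloping algebra of the Lie algebra 𝕎ₙ of all
k-linear derivations of the polynomial ring k[x₁,…,xₙ] is neither left nor right noetherian.
-/

noncomputable section

/-- The Lie algebra `𝕎ₙ` of all `k`-linear derivations of `k[x₁, …, xₙ]`. -/
abbrev cartanW (k : Type*) [Field k] (n : ℕ) :=
  Derivation k (MvPolynomial (Fin n) k) (MvPolynomial (Fin n) k)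

/-!
The divergence is a 1-cocycle of the Lie algebra `L` of polynomial vector fields with values in the
polynomial ring `A`, so it makes `R × A` an extension of the trivial `L`-module `R` by `A`. For each
polynomial `f` some element of the enveloping algebra acts on this extension as
`(c, q) ↦ (0, 2cf)`, an operator whose image is spanned by `(0, 2f)`. For a submodule `N` of `2A`,
the elements whose action on `R × A` has its image in `0 × N` form a right ideal, and these rank one
operators show that the right ideal determines `N`. A right noetherian enveloping algebra would
thus force the `R`-module `2A` to be noetherian, although `A` is free of infinite rank and `2 ≠ 0`.
The antipode exchanges left and right.
-/

section NoetherianActions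

open Module

open scoped Pointwise in
theorem not_isNoetherian_smul_top_of_basis {R M ι : Type*} [CommSemiring R] [AddCommMonoid M]
    [Module R M] [Infinite ι] (b : Basis ι R M) {r : R} (hr : r ≠ 0) :
    ¬ IsNoetherian R ↥(r • (⊤ : Submodule R M)) := by
  classical
  intro h
  obtain ⟨s, hs⟩ := isNoetherian_submodule.mp h _ le_rfl
  obtain ⟨i, hi⟩ := Infinite.exists_notMem_finset (s.biUnion fun x => (b.repr x).support)
  have hle : r • (⊤ : Submodule R M) ≤ LinearMap.ker (b.coord i) := by
    rw [← hs, Submodule.span_le]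
    intro x hx
    by_contra hxi
    exact hi (Finset.mem_biUnion.mpr ⟨x, hx, Finsupp.mem_support_iff.mpr hxi⟩)
  have hri : b.coord i (r • b i) = 0 := hle (Submodule.smul_mem_pointwise_smul _ _ _ trivial)
  exact hr (by simpa using hri)

variable {R A M : Type*} [CommSemiring R] [Semiring A] [Algebra R A] [AddCommMonoid M] [Module R M]

/-- The right ideal of `A`, encoded as an ideal of `Aᵐᵒᵖ`, of the elements whose action on the
representation `M` has its image in the submodule `N`. -/
def rightIdealOfRangeLE (ρ : A →ₐ[R] End R M) (N : Submodule R M) : Ideal Aᵐᵒᵖ where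
  carrier := {a | LinearMap.range (ρ a.unop) ≤ N}
  zero_mem' := by simp
  add_mem' {a b} ha hb := by
    rintro _ ⟨m, rfl⟩
    simpa using N.add_mem (ha ⟨m, rfl⟩) (hb ⟨m, rfl⟩)
  smul_mem' b a ha := by
    rintro _ ⟨m, rfl⟩
    simpa using ha ⟨ρ b.unop m, rfl⟩

theorem op_mem_rightIdealOfRangeLE {ρ : A →ₐ[R] End R M} {N : Submodule R M} {a : A} :
    MulOpposite.op a ∈ rightIdealOfRangeLE ρ N ↔ LinearMap.range (ρ a) ≤ N :=
  Iff.rfl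

theorem rightIdealOfRangeLE_mono (ρ : A →ₐ[R] End R M) : Monotone (rightIdealOfRangeLE ρ) :=
  fun _ _ hN _ ha => le_trans ha hN

theorem isNoetherian_of_isNoetherianRing_op [IsNoetherianRing Aᵐᵒᵖ] (ρ : A →ₐ[R] End R M)
    (N : Submodule R M) (hN : ∀ x ∈ N, ∃ a, LinearMap.range (ρ a) = Submodule.span R {x}) :
    IsNoetherian R N := by
  let I (P : Submodule R N) : Ideal Aᵐᵒᵖ := rightIdealOfRangeLE ρ (P.map N.subtype)
  have hI (P Q : Submodule R N) : I P ≤ I Q ↔ P ≤ Q := by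
    refine ⟨fun hPQ x hx => ?_, fun hPQ => rightIdealOfRangeLE_mono ρ (Submodule.map_mono hPQ)⟩
    obtain ⟨a, ha⟩ := hN x x.2
    have haP : MulOpposite.op a ∈ I P := by
      rw [op_mem_rightIdealOfRangeLE, ha, Submodule.span_singleton_le_iff_mem]
      exact Submodule.mem_map_of_mem hx
    have haQ := hPQ haP
    rw [op_mem_rightIdealOfRangeLE, ha, Submodule.span_singleton_le_iff_mem] at haQ
    exact N.injective_subtype.mem_set_image.mp haQ
  exact isNoetherian_iff'.mpr (OrderEmbedding.ofMapLEIff I hI).strictMono.wellFoundedGT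

end NoetherianActions

attribute [local instance] LieRing.ofAssociativeRing

section Antipode

open UniversalEnvelopingAlgebra MulOpposite

variable (R L : Type*) [CommRing R] [LieRing L] [LieAlgebra R L]

/-- The antipode `x ↦ -x` of the universal enveloping algebra, as a homomorphism to the opposite
algebra. -/
def envelopingAntipode :
    UniversalEnvelopingAlgebra R L →ₐ[R] (UniversalEnvelopingAlgebra R L)ᵐᵒᵖ :=
  lift R
    { toFun := fun x => op (-ι R x)
      map_add' := fun x y => by rw [map_add, neg_add, op_add]
      map_smul' := fun r x => by rw [map_smul, ← smul_neg, op_smul, RingHom.id_apply]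
      map_lie' := fun {x y} => by
        simp only [LieHom.map_lie, LieRing.of_associative_ring_bracket, ← op_mul, ← op_sub,
          neg_mul_neg, neg_sub] }

theorem envelopingAntipode_ι (x : L) : envelopingAntipode R L (ι R x) = op (-ι R x) :=
  lift_ι_apply R _ x

theorem opComm_envelopingAntipode_comp_envelopingAntipode :
    (AlgHom.opComm (envelopingAntipode R L)).comp (envelopingAntipode R L) = AlgHom.id R _ := by
  refine hom_ext R (LieHom.ext fun x => ?_)
  change (envelopingAntipode R L (envelopingAntipode R L (ι R x)).unop).unop = ι R x
  simp only [envelopingAntipode_ι, map_neg, unop_op, unop_neg, neg_neg]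

theorem envelopingAntipode_surjective : Function.Surjective (envelopingAntipode R L) := fun u =>
  ⟨(envelopingAntipode R L u.unop).unop, unop_injective <|
    DFunLike.congr_fun (opComm_envelopingAntipode_comp_envelopingAntipode R L) u.unop⟩

theorem isNoetherianRing_op_of_isNoetherianRing_universalEnvelopingAlgebra
    [IsNoetherianRing (UniversalEnvelopingAlgebra R L)] :
    IsNoetherianRing (UniversalEnvelopingAlgebra R L)ᵐᵒᵖ :=
  isNoetherianRing_of_surjective _ _ (envelopingAntipode R L).toRingHom
    (envelopingAntipode_surjective R L)

end Antipode

section CocycleExtension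

variable {R L M : Type*} [CommRing R] [LieRing L] [LieAlgebra R L] [AddCommGroup M] [Module R M]
  [LieRingModule L M] [LieModule R L M]

/-- The extension of the trivial `L`-module `R` by `M` defined by a 1-cocycle `φ : L → M`, that is,
by a Lie derivation with values in `M`. -/
def cocycleExtension (φ : LieDerivation R L M) : L →ₗ⁅R⁆ Module.End R (R × M) where
  toFun x := LinearMap.inr R R M ∘ₗ (LinearMap.toSpanSingleton R M (φ x)).coprod
    (LieModule.toEnd R L M x)
  map_add' x y := by ext <;> simp
  map_smul' r x := by ext <;> simp
  map_lie' {x y} := by ext <;> simp [LieRing.of_associative_ring_bracket]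

theorem cocycleExtension_apply (φ : LieDerivation R L M) (x : L) (v : R × M) :
    cocycleExtension φ x v = (0, v.1 • φ x + ⁅x, v.2⁆) :=
  rfl

end CocycleExtension

/-- The Lie algebra of polynomial vector fields over `R` in the variables `σ`. -/
abbrev PolyVectorField (R σ : Type*) [CommRing R] :=
  Derivation R (MvPolynomial σ R) (MvPolynomial σ R)

namespace PolyVectorField

open MvPolynomial UniversalEnvelopingAlgebra

variable {R σ : Type*} [CommRing R]

section Divergence

variable [Fintype σ]

theorem apply_eq_sum_pderiv (D : PolyVectorField R σ) (p : MvPolynomial σ R) :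
    D p = ∑ i, D (X i) * pderiv i p := by
  classical
  have hsum (q : MvPolynomial σ R) :
      (∑ i, D (X i) • pderiv i : PolyVectorField R σ) q = ∑ i, D (X i) * pderiv i q := by
    rw [← Derivation.coeFnAddMonoidHom_apply, map_sum, Finset.sum_apply]
    rfl
  have hD : D = ∑ i, D (X i) • pderiv i :=
    derivation_ext fun j => by simp [hsum, pderiv_X, Pi.single_apply]
  exact (DFunLike.congr_fun hD p).trans (hsum p)

theorem pderiv_apply (D : PolyVectorField R σ) (i : σ) (p : MvPolynomial σ R) :
    pderiv i (D p) = D (pderiv i p) + ∑ j, pderiv i (D (X j)) * pderiv j p := by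
  classical
  have hX (j : σ) : ⁅(pderiv i : PolyVectorField R σ), D⁆ (X j) = pderiv i (D (X j)) := by
    rw [Derivation.commutator_apply, pderiv_X, Pi.single_apply]
    split_ifs <;> simp
  have hlie := apply_eq_sum_pderiv ⁅(pderiv i : PolyVectorField R σ), D⁆ p
  simp only [hX, Derivation.commutator_apply] at hlie
  exact sub_eq_iff_eq_add'.mp hlie

variable (R σ) in
/-- The divergence of a polynomial vector field, a 1-cocycle with values in the polynomials. -/
def divergence : LieDerivation R (PolyVectorField R σ) (MvPolynomial σ R) where
  toFun D := ∑ i, pderiv i (D (X i))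
  map_add' D E := by simp [Finset.sum_add_distrib]
  map_smul' r D := by simp [Finset.smul_sum]
  leibniz' D E := by
    have hsymm : ∑ i, ∑ j, pderiv i (D (X j)) * pderiv j (E (X i)) =
        ∑ i, ∑ j, pderiv i (E (X j)) * pderiv j (D (X i)) := by
      rw [Finset.sum_comm]
      exact Finset.sum_congr rfl fun _ _ => Finset.sum_congr rfl fun _ _ => mul_comm _ _
    simp only [LinearMap.coe_mk, AddHom.coe_mk, Derivation.commutator_apply, map_sub,
      Finset.sum_sub_distrib, map_sum, Derivation.bracket_eq_fun,
      fun i => pderiv_apply D i (E (X i)), fun i => pderiv_apply E i (D (X i)),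
      Finset.sum_add_distrib, hsymm]
    ring

theorem divergence_apply (D : PolyVectorField R σ) : divergence R σ D = ∑ i, pderiv i (D (X i)) :=
  rfl

theorem divergence_smul_pderiv (i : σ) (f : MvPolynomial σ R) :
    divergence R σ (f • pderiv i) = pderiv i f := by
  classical
  simp [divergence_apply, pderiv_X, Pi.single_apply, apply_ite (pderiv _)]

variable (R σ) in
/-- The action of the enveloping algebra on the extension of the trivial module by the polynomials
that is defined by the divergence. -/
def divergenceAction :
    UniversalEnvelopingAlgebra R (PolyVectorField R σ) →ₐ[R] Module.End R (R × MvPolynomial σ R) :=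
  lift R (cocycleExtension (divergence R σ))

theorem divergenceAction_ι_smul_pderiv (i : σ) (f : MvPolynomial σ R) (v : R × MvPolynomial σ R) :
    divergenceAction R σ (ι R (f • pderiv i : PolyVectorField R σ)) v =
      (0, v.1 • pderiv i f + f * pderiv i v.2) := by
  rw [divergenceAction, lift_ι_apply, cocycleExtension_apply, divergence_smul_pderiv]
  rfl

theorem divergenceAction_ι_smul_pderiv_mul (i : σ) (f g : MvPolynomial σ R)
    (v : R × MvPolynomial σ R) :
    divergenceAction R σ
        (ι R (f • pderiv i : PolyVectorField R σ) * ι R (g • pderiv i : PolyVectorField R σ)) v =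
      (0, v.1 • (f * pderiv i (pderiv i g)) + f * pderiv i g * pderiv i v.2 +
        f * g * pderiv i (pderiv i v.2)) := by
  simp only [map_mul, Module.End.mul_apply, divergenceAction_ι_smul_pderiv, zero_smul, zero_add,
    map_add, Derivation.map_smul, pderiv_mul]
  refine Prod.ext rfl ?_
  simp only [smul_eq_C_mul]
  ring

/-- An element of the enveloping algebra whose action on the divergence extension has image spanned
by `(0, 2f)`. The product `(a ∂ᵢ)(b ∂ᵢ)` acts as `(c, q) ↦ (0, c a ∂ᵢ²b + a ∂ᵢb ∂ᵢq + a b ∂ᵢ²q)`,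
and replacing `a ⊗ b` by `f (Xᵢ ⊗ 1 - 1 ⊗ Xᵢ) ^ 2` kills the two terms in `q`. -/
def rankOneElement (i : σ) (f : MvPolynomial σ R) :
    UniversalEnvelopingAlgebra R (PolyVectorField R σ) :=
  let e (g : MvPolynomial σ R) := ι R (g • pderiv i : PolyVectorField R σ)
  e (f * X i ^ 2) * e 1 - (2 : R) • (e (f * X i) * e (X i)) + e f * e (X i ^ 2)

theorem divergenceAction_rankOneElement (i : σ) (f : MvPolynomial σ R)
    (v : R × MvPolynomial σ R) :
    divergenceAction R σ (rankOneElement i f) v = v.1 • (0, (2 : R) • f) := by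
  have hX : pderiv i (X i ^ 2 : MvPolynomial σ R) = (2 : R) • X i := by
    simp [smul_eq_C_mul, map_ofNat]
  simp only [rankOneElement, map_add, map_sub, map_smul, LinearMap.add_apply,
    LinearMap.sub_apply, LinearMap.smul_apply, divergenceAction_ι_smul_pderiv_mul, hX,
    Derivation.map_smul, pderiv_X_self, pderiv_one, map_zero]
  refine Prod.ext ?_ ?_
  · simp
  · simp only [Prod.snd_add, Prod.snd_sub, Prod.smul_snd, smul_eq_C_mul, map_ofNat]
    ring

theorem range_divergenceAction_rankOneElement (i : σ) (f : MvPolynomial σ R) :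
    LinearMap.range (divergenceAction R σ (rankOneElement i f)) =
      Submodule.span R {(0, (2 : R) • f)} := by
  have hsmul : divergenceAction R σ (rankOneElement i f) =
      LinearMap.toSpanSingleton R _ (0, (2 : R) • f) ∘ₗ LinearMap.fst R R _ :=
    LinearMap.ext (divergenceAction_rankOneElement i f)
  rw [hsmul, LinearMap.range_comp_of_range_eq_top _ Submodule.range_fst,
    LinearMap.range_toSpanSingleton]

end Divergence

open scoped Pointwise in
theorem not_isNoetherianRing_op_universalEnvelopingAlgebra [Finite σ] [Nonempty σ]
    (h2 : (2 : R) ≠ 0) :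
    ¬ IsNoetherianRing (UniversalEnvelopingAlgebra R (PolyVectorField R σ))ᵐᵒᵖ := by
  intro _
  have := Fintype.ofFinite σ
  obtain ⟨i⟩ := ‹Nonempty σ›
  let N := ((2 : R) • (⊤ : Submodule R (MvPolynomial σ R))).map (LinearMap.inr R R _)
  have hN : IsNoetherian R N := by
    refine isNoetherian_of_isNoetherianRing_op (divergenceAction R σ) N ?_
    rintro _ ⟨_, ⟨f, -, rfl⟩, rfl⟩
    exact ⟨rankOneElement i f, range_divergenceAction_rankOneElement i f⟩
  exact not_isNoetherian_smul_top_of_basis (basisMonomials σ R) h2 <| isNoetherian_of_linearEquiv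
    (Submodule.equivMapOfInjective (LinearMap.inr R R _) LinearMap.inr_injective _).symm

end PolyVectorField

theorem enveloping_cartanW_not_noetherian_general (R σ : Type*) [CommRing R] [Finite σ]
    [Nonempty σ] (h2 : (2 : R) ≠ 0) :
    ¬ IsNoetherianRing (UniversalEnvelopingAlgebra R (PolyVectorField R σ)) ∧
      ¬ IsNoetherianRing (UniversalEnvelopingAlgebra R (PolyVectorField R σ))ᵐᵒᵖ := by
  have hright := PolyVectorField.not_isNoetherianRing_op_universalEnvelopingAlgebra (σ := σ) h2
  exact ⟨fun _ => hright (isNoetherianRing_op_of_isNoetherianRing_universalEnvelopingAlgebra R _),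
    hright⟩

theorem enveloping_cartanW_not_noetherian (k : Type*) [Field k] [CharZero k]
    (n : ℕ) (hn : 1 ≤ n) :
    ¬ IsNoetherianRing (UniversalEnvelopingAlgebra k (cartanW k n)) ∧
      ¬ IsNoetherianRing (UniversalEnvelopingAlgebra k (cartanW k n))ᵐᵒᵖ := by
  have : Nonempty (Fin n) := ⟨⟨0, hn⟩⟩
  exact enveloping_cartanW_not_noetherian_general k (Fin n) two_ne_zero

end
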